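/- arXiv:2310.19486 — 5 statements merged into one kernel-verified Lean document; each statement's English description precedes it below -/
import Mathlib

section
/- Let n and k be relatively prime integers with 2 ≤ k ≤ n−1, and for 1 ≤ i ≤ k−1 set a_i = ⌈n·i/k⌉. Then in the braid group B_n the element δ^k is conjugate to δ·U_{a_1}·U_{a_2}·⋯·U_{a_{k−1}}; that is, there exists x ∈ B_n with x⁻¹·δ^k·x = δ·U_{a_1}·⋯·U_{a_{k−1}}. -/
/-- The braid relations on `m` generators (so that `σ_1, …, σ_m` present the braid
group `B_{m+1}`); generator `i : Fin m` corresponds to `σ_{i+1}`. -/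
def braidRels (m : ℕ) : Set (FreeGroup (Fin m)) :=
  {r | ∃ i j : Fin m, (i.val + 2 ≤ j.val ∨ j.val + 2 ≤ i.val) ∧
        r = FreeGroup.of i * FreeGroup.of j * (FreeGroup.of i)⁻¹ * (FreeGroup.of j)⁻¹}
  ∪ {r | ∃ i j : Fin m, (i.val + 1 = j.val ∨ j.val + 1 = i.val) ∧
        r = FreeGroup.of i * FreeGroup.of j * FreeGroup.of i *
            (FreeGroup.of j * FreeGroup.of i * FreeGroup.of j)⁻¹}

/-- The braid group `B n` on `n` strands, presented with generators `σ_1, …, σ_{n-1}`. -/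
abbrev BraidGroup (n : ℕ) : Type := PresentedGroup (braidRels (n - 1))

namespace BraidGroup

/-- The Artin generator `σ_i` of `B n` for `1 ≤ i ≤ n - 1` (junk value `1` otherwise). -/
def σ (n i : ℕ) : BraidGroup n :=
  if h : 1 ≤ i ∧ i ≤ n - 1 then PresentedGroup.of (⟨i - 1, by omega⟩ : Fin (n - 1)) else 1

/-- `D n k = σ_{k-1} ⋯ σ_2 σ_1` in `B n`; `D n 1 = 1`. -/
def D (n k : ℕ) : BraidGroup n :=
  (((List.range (k - 1)).reverse).map (fun j => σ n (j + 1))).prod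

/-- `E n k = σ_1 σ_2 ⋯ σ_{k-1}` in `B n`; `E n 1 = 1`. -/
def E (n k : ℕ) : BraidGroup n :=
  ((List.range (k - 1)).map (fun j => σ n (j + 1))).prod

/-- `U n k = D n k * E n k` in `B n`; `U n 1 = 1`. -/
def U (n k : ℕ) : BraidGroup n := D n k * E n k

/-- `δ = σ_{n-1} σ_{n-2} ⋯ σ_1` in `B n`. -/
def delta (n : ℕ) : BraidGroup n := D n n

/-- `Δ = σ_1 (σ_2 σ_1) ⋯ (σ_{n-1} ⋯ σ_1) = D_2 D_3 ⋯ D_n` in `B n`. -/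
def Delta (n : ℕ) : BraidGroup n :=
  ((List.range (n - 1)).map (fun j => D n (j + 2))).prod

end BraidGroup

/-! Sort the strands `i = 1, …, n - 1` by the residue of `k * i` modulo `n`, taken in `{1, …, n}`,
inserting one strand at a time, and let `β` be the resulting positive braid. The relations
`σ_i δ = δ σ_{i+1}` give `β δ = δ β'`, where `β'` is `β` with all indices raised by one, so it
suffices to prove `δ ^ (k - 1) β = β' U_{a_1} ⋯ U_{a_{k-1}}`.

Let `w m` be the number of positive multiples of `n` below `k * m`, and let `β_m` be the part of
`β` that sorts the first `m` strands. By induction on `m`,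
`D_m ^ (w m) β_m = β'_{m-1} U_{a_1} ⋯ U_{a_{w m}}`. If `w (m + 1) = w m`, the powers of `D_m` turn
into powers of `D_{m+1}` while the strand being inserted moves up by one position per power.
Otherwise `m + 1` is the next `a_j`, and `U_{m+1}`, which commutes with `β_m`, supplies the missing
factor `D_{m+1}`. For `m = n` this is the required identity: `n` has the largest residue, so
`β_n = β`, and `w n = k - 1`.
-/

namespace BraidGroup

variable {n : ℕ}

/-! ### Relations between `σ`, `D` and `U` -/

lemma commute_σ {i j : ℕ} (hij : i + 2 ≤ j) : Commute (σ n i) (σ n j) := by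
  unfold σ
  split_ifs with hi hj
  · have hrel : PresentedGroup.mk (braidRels (n - 1)) _ = 1 :=
      PresentedGroup.one_of_mem (Or.inl ⟨⟨i - 1, by omega⟩, ⟨j - 1, by omega⟩,
        Or.inl (by simp only; omega), rfl⟩)
    simp only [map_mul, map_inv, mul_inv_eq_one] at hrel
    exact mul_inv_eq_iff_eq_mul.1 hrel
  · exact Commute.one_right _
  · exact Commute.one_left _
  · exact Commute.one_left _

lemma σ_braid {i : ℕ} (hi : 1 ≤ i) (hin : i + 1 < n) :
    σ n i * σ n (i + 1) * σ n i = σ n (i + 1) * σ n i * σ n (i + 1) := by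
  unfold σ
  rw [dif_pos (by omega), dif_pos (by omega)]
  have hrel : PresentedGroup.mk (braidRels (n - 1)) _ = 1 :=
    PresentedGroup.one_of_mem (Or.inr ⟨⟨i - 1, by omega⟩, ⟨i + 1 - 1, by omega⟩,
      Or.inl (by simp only; omega), rfl⟩)
  simp only [map_mul, map_inv, mul_inv_eq_one] at hrel
  exact hrel

lemma D_one : D n 1 = 1 := by simp [D]

lemma D_succ {m : ℕ} (hm : 1 ≤ m) : D n (m + 1) = σ n m * D n m := by
  obtain ⟨p, rfl⟩ := Nat.exists_eq_add_of_le' hm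
  simp [D, List.range_succ]

/-- The word `σ_a σ_{a+1} ⋯ σ_{b-1}` in `B n`, which is `1` for `b ≤ a`. -/
def ascend (n a b : ℕ) : BraidGroup n :=
  ((List.range' a (b - a)).map (σ n)).prod

lemma ascend_self (a : ℕ) : ascend n a a = 1 := by simp [ascend]

lemma ascend_succ {a b : ℕ} (hab : a ≤ b) : ascend n a (b + 1) = ascend n a b * σ n b := by
  obtain ⟨c, rfl⟩ := Nat.exists_eq_add_of_le hab
  simp [ascend, add_assoc, List.range'_concat]

lemma E_eq_ascend (m : ℕ) : E n m = ascend n 1 m := by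
  simp [E, ascend, List.range'_eq_map_range, Function.comp_def, add_comm]

lemma commute_D_σ {m j : ℕ} (hm : 1 ≤ m) (hmj : m + 1 ≤ j) : Commute (D n m) (σ n j) := by
  induction m, hm using Nat.le_induction with
  | base => exact D_one (n := n) ▸ Commute.one_left _
  | succ m hm ih => exact D_succ (n := n) hm ▸ (commute_σ (by omega)).mul_left (ih (by omega))

lemma commute_ascend_σ {a b j : ℕ} (hab : a ≤ b) (hbj : b + 1 ≤ j) :
    Commute (ascend n a b) (σ n j) := by
  induction b, hab using Nat.le_induction with
  | base => exact ascend_self (n := n) a ▸ Commute.one_left _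
  | succ b hab ih =>
    exact ascend_succ (n := n) hab ▸ (ih (by omega)).mul_left (commute_σ (by omega))

lemma σ_mul_D {i m : ℕ} (hi : 1 ≤ i) (him : i + 2 ≤ m) (hmn : m ≤ n) :
    σ n i * D n m = D n m * σ n (i + 1) := by
  induction m, him using Nat.le_induction with
  | base =>
    rw [D_succ (m := i + 1) (by omega), D_succ hi]
    calc σ n i * (σ n (i + 1) * (σ n i * D n i))
        = σ n i * σ n (i + 1) * σ n i * D n i := by simp only [mul_assoc]
      _ = σ n (i + 1) * σ n i * (σ n (i + 1) * D n i) := by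
        rw [σ_braid hi (by omega), mul_assoc]
      _ = σ n (i + 1) * (σ n i * D n i) * σ n (i + 1) := by
        rw [← (commute_D_σ hi le_rfl).eq]; simp only [mul_assoc]
  | succ m hm ih =>
    rw [D_succ (by omega), ← mul_assoc, (commute_σ hm).eq, mul_assoc, ih (by omega), mul_assoc]

lemma ascend_mul_σ {a i b : ℕ} (ha : 1 ≤ a) (hai : a ≤ i) (hib : i + 2 ≤ b) (hbn : b ≤ n) :
    ascend n a b * σ n i = σ n (i + 1) * ascend n a b := by
  induction b, hib using Nat.le_induction with
  | base =>
    rw [ascend_succ (b := i + 1) (by omega), ascend_succ hai]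
    calc ascend n a i * σ n i * σ n (i + 1) * σ n i
        = ascend n a i * (σ n i * σ n (i + 1) * σ n i) := by simp only [mul_assoc]
      _ = ascend n a i * σ n (i + 1) * σ n i * σ n (i + 1) := by
        rw [σ_braid (by omega) (by omega)]; simp only [mul_assoc]
      _ = σ n (i + 1) * (ascend n a i * σ n i * σ n (i + 1)) := by
        rw [(commute_ascend_σ hai le_rfl).eq]; simp only [mul_assoc]
  | succ b hb ih =>
    rw [ascend_succ (by omega), mul_assoc, ← (commute_σ hb).eq, ← mul_assoc, ih (by omega),
      mul_assoc]

lemma commute_σ_U {i m : ℕ} (hi : 1 ≤ i) (him : i + 2 ≤ m) (hmn : m ≤ n) :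
    Commute (σ n i) (U n m) := by
  calc σ n i * (D n m * E n m)
      = D n m * (σ n (i + 1) * E n m) := by rw [← mul_assoc, σ_mul_D hi him hmn, mul_assoc]
    _ = D n m * E n m * σ n i := by
      rw [E_eq_ascend, ← ascend_mul_σ le_rfl hi him hmn, mul_assoc]

lemma commute_D_U {b m : ℕ} (hb : 1 ≤ b) (hbm : b + 1 ≤ m) (hmn : m ≤ n) :
    Commute (D n b) (U n m) := by
  induction b, hb using Nat.le_induction with
  | base => exact D_one (n := n) ▸ Commute.one_left _
  | succ b hb ih =>
    exact D_succ (n := n) hb ▸ (commute_σ_U hb (by omega) hmn).mul_left (ih (by omega))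

lemma commute_ascend_U {a b m : ℕ} (ha : 1 ≤ a) (hab : a ≤ b) (hbm : b + 1 ≤ m) (hmn : m ≤ n) :
    Commute (ascend n a b) (U n m) := by
  induction b, hab using Nat.le_induction with
  | base => exact ascend_self (n := n) a ▸ Commute.one_left _
  | succ b hab ih =>
    exact ascend_succ (n := n) hab ▸
      (ih (by omega)).mul_left (commute_σ_U (by omega) (by omega) hmn)

lemma ascend_mul_D {a b m : ℕ} (ha : 1 ≤ a) (hab : a ≤ b) (hbm : b + 1 ≤ m) (hmn : m ≤ n) :
    ascend n a b * D n m = D n m * ascend n (a + 1) (b + 1) := by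
  induction b, hab using Nat.le_induction with
  | base => rw [ascend_self, ascend_self, one_mul, mul_one]
  | succ b hab ih =>
    rw [ascend_succ hab, ascend_succ (by omega), mul_assoc, σ_mul_D (by omega) (by omega) hmn,
      ← mul_assoc, ih (by omega), mul_assoc]

lemma ascend_succ_mul_D {a m : ℕ} (ha : 1 ≤ a) (ham : a ≤ m) (hmn : m + 1 ≤ n) :
    ascend n a (m + 1) * D n m = D n (m + 1) * ascend n (a + 1) (m + 1) := by
  rw [ascend_succ ham, mul_assoc, ← D_succ (by omega), ascend_mul_D ha ham le_rfl hmn]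

lemma ascend_succ_mul_D_pow {a s m : ℕ} (ha : 1 ≤ a) (hasm : a + s ≤ m + 1) (hmn : m + 1 ≤ n) :
    ascend n a (m + 1) * D n m ^ s = D n (m + 1) ^ s * ascend n (a + s) (m + 1) := by
  induction s with
  | zero => simp
  | succ s ih =>
    rw [pow_succ, ← mul_assoc, ih (by omega), mul_assoc,
      ascend_succ_mul_D (by omega) (by omega) hmn, ← mul_assoc, ← pow_succ, add_assoc]

lemma D_pow_mul_U {q m : ℕ} (hqm : q ≤ m) (hmn : m + 1 ≤ n) :
    D n m ^ q * U n (m + 1) = D n (m + 1) ^ (q + 1) * ascend n (q + 1) (m + 1) := by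
  induction q with
  | zero => simp [U, E_eq_ascend]
  | succ q ih =>
    rw [pow_succ, mul_assoc, (commute_D_U (by omega) le_rfl hmn).eq, ← mul_assoc, ih (by omega),
      mul_assoc, ascend_succ_mul_D (by omega) (by omega) hmn, ← mul_assoc, ← pow_succ]

lemma ascend_mul_D_pow_mul_U {a b t m : ℕ} (ham : a ≤ m) (hb : 1 ≤ b) (hbm : b ≤ m + 1)
    (habt : b + m = a + t + 1) (hmn : m + 1 ≤ n) :
    ascend n (a + 1) (m + 1) * (D n m ^ t * U n (m + 1)) =
      D n (m + 1) ^ (t + 1) * ascend n b (m + 1) := by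
  obtain ⟨c, rfl⟩ := Nat.exists_eq_add_of_le ham
  obtain ⟨q, rfl⟩ := Nat.exists_eq_add_of_le' hb
  obtain rfl : t = c + q := by omega
  have hexhaust : ascend n (a + 1) (a + c + 1) * D n (a + c) ^ c = D n (a + c + 1) ^ c := by
    rw [ascend_succ_mul_D_pow (by omega) (by omega) hmn, add_right_comm a 1 c, ascend_self,
      mul_one]
  calc ascend n (a + 1) (a + c + 1) * (D n (a + c) ^ (c + q) * U n (a + c + 1))
      = (ascend n (a + 1) (a + c + 1) * D n (a + c) ^ c) *
          (D n (a + c) ^ q * U n (a + c + 1)) := by rw [pow_add]; simp only [mul_assoc]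
    _ = D n (a + c + 1) ^ (c + q + 1) * ascend n (q + 1) (a + c + 1) := by
      rw [hexhaust, D_pow_mul_U (by omega) hmn, ← mul_assoc, ← pow_add, add_assoc c]

/-! ### Insertion braids -/

/-- The positive braid that inserts strand `1`, then strand `2`, …, then strand `m`, moving strand
`i` to position `r i` among the first `i` strands; `s` is added to all indices of generators. -/
def insertionBraid (n : ℕ) (r : ℕ → ℕ) (s : ℕ) : ℕ → BraidGroup n
  | 0 => 1
  | m + 1 => ascend n (r (m + 1) + s) (m + 1 + s) * insertionBraid n r s m

lemma insertionBraid_mul_delta {r : ℕ → ℕ} (hr : ∀ i, r (i + 1) ∈ Set.Icc 1 (i + 1)) {s m : ℕ}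
    (hmn : m + s + 1 ≤ n) :
    insertionBraid n r s m * delta n = delta n * insertionBraid n r (s + 1) m := by
  induction m with
  | zero => simp [insertionBraid]
  | succ m ih =>
    obtain ⟨hr₁, hrm⟩ := hr m
    rw [insertionBraid, insertionBraid, mul_assoc, ih (by omega), ← mul_assoc, delta,
      ascend_mul_D (by omega) (by omega) hmn le_rfl, mul_assoc]
    rfl

lemma commute_insertionBraid_U {r : ℕ → ℕ} (hr : ∀ i, r (i + 1) ∈ Set.Icc 1 (i + 1)) {s m l : ℕ}
    (hml : m + s + 1 ≤ l) (hln : l ≤ n) :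
    Commute (insertionBraid n r s m) (U n l) := by
  induction m with
  | zero => exact Commute.one_left _
  | succ m ih =>
    obtain ⟨hr₁, hrm⟩ := hr m
    exact (commute_ascend_U (by omega) (by omega) hml hln).mul_left (ih (by omega))

/-- A schedule for inserting the strands `1, …, n` of an `insertionBraid` by means of factors `U`:
strand `m` goes to position `r m`, the first `m` strands use `w m` factors, and `a j` is the strand
whose insertion uses the `j`-th factor. The recursion for `r` is the one for which inserting strand
`m + 1` turns `D_m ^ (w m)` into `D_{m+1} ^ (w (m + 1))`. -/
structure IsInsertionSchedule (n : ℕ) (r w a : ℕ → ℕ) : Prop where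
  position_mem_Icc : ∀ i, r (i + 1) ∈ Set.Icc 1 (i + 1)
  factors_one : w 1 = 0
  step : ∀ m < n,
    w (m + 1) = w m ∧ r (m + 1) = r m + w m + 1 ∨
    w (m + 1) = w m + 1 ∧ r (m + 1) + m = r m + w m + 1 ∧ a (w m + 1) = m + 1

namespace IsInsertionSchedule

variable {r w a : ℕ → ℕ}

lemma D_pow_mul_insertionBraid (h : IsInsertionSchedule n r w a) {m : ℕ} (hmn : m + 1 ≤ n) :
    D n (m + 1) ^ w (m + 1) * insertionBraid n r 0 (m + 1) =
      insertionBraid n r 1 m * ((List.range (w (m + 1))).map fun j => U n (a (j + 1))).prod := by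
  induction m with
  | zero =>
    have hr₁ : r 1 = 1 := Nat.le_antisymm (h.position_mem_Icc 0).2 (h.position_mem_Icc 0).1
    simp [insertionBraid, h.factors_one, hr₁, ascend_self]
  | succ m ih =>
    obtain ⟨hr₁, hrm⟩ := h.position_mem_Icc m
    obtain ⟨hr₁', hrm'⟩ := h.position_mem_Icc (m + 1)
    set β := insertionBraid n r 0 (m + 1)
    set P := ((List.range (w (m + 1))).map fun j => U n (a (j + 1))).prod
    change D n (m + 2) ^ w (m + 2) * (ascend n (r (m + 2)) (m + 2) * β) =
      ascend n (r (m + 1) + 1) (m + 2) * insertionBraid n r 1 m * _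
    rcases h.step (m + 1) hmn with ⟨hwm, hrank⟩ | ⟨hwm, hrank, ham⟩
    · rw [hwm]
      calc D n (m + 2) ^ w (m + 1) * (ascend n (r (m + 2)) (m + 2) * β)
          = ascend n (r (m + 1) + 1) (m + 2) * (D n (m + 1) ^ w (m + 1) * β) := by
            rw [← mul_assoc, ← mul_assoc, ascend_succ_mul_D_pow (by omega) (by omega) hmn, hrank,
              add_right_comm]
        _ = ascend n (r (m + 1) + 1) (m + 2) * insertionBraid n r 1 m * P := by
            rw [ih (by omega), mul_assoc]
    · have hβ : U n (m + 2) * β = β * U n (m + 2) :=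
        (commute_insertionBraid_U h.position_mem_Icc (s := 0) le_rfl hmn).eq.symm
      rw [hwm, List.prod_range_succ, ham]
      calc D n (m + 2) ^ (w (m + 1) + 1) * (ascend n (r (m + 2)) (m + 2) * β)
          = ascend n (r (m + 1) + 1) (m + 2) * (D n (m + 1) ^ w (m + 1) * U n (m + 2)) * β := by
            rw [ascend_mul_D_pow_mul_U hrm hr₁' hrm' hrank hmn, mul_assoc]
        _ = ascend n (r (m + 1) + 1) (m + 2) * (D n (m + 1) ^ w (m + 1) * β) * U n (m + 2) := by
            simp only [mul_assoc, hβ]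
        _ = ascend n (r (m + 1) + 1) (m + 2) * insertionBraid n r 1 m * (P * U n (m + 2)) := by
            rw [ih (by omega)]; simp only [mul_assoc, P]

lemma delta_pow_mul_insertionBraid (h : IsInsertionSchedule n r w a) (hn : 0 < n)
    (hrn : r n = n) :
    delta n ^ (w n + 1) * insertionBraid n r 0 (n - 1) =
      insertionBraid n r 0 (n - 1) *
        (delta n * ((List.range (w n)).map fun j => U n (a (j + 1))).prod) := by
  have hlast : insertionBraid n r 0 n = insertionBraid n r 0 (n - 1) := by
    obtain ⟨p, rfl⟩ := Nat.exists_eq_add_of_le' hn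
    rw [insertionBraid, hrn, ascend_self, one_mul, Nat.add_sub_cancel]
  have hpow := h.D_pow_mul_insertionBraid (m := n - 1) (by omega)
  rw [Nat.sub_add_cancel hn, hlast] at hpow
  rw [pow_succ', mul_assoc, delta, hpow, ← delta, ← mul_assoc, ← mul_assoc,
    insertionBraid_mul_delta h.position_mem_Icc (by omega)]

end IsInsertionSchedule

/-! ### Residues of the multiples of `k` modulo `n` -/

/-- The number of positive multiples of `n` strictly below `k * m`, that is, the number of times
the walk `k, 2 * k, …, m * k` wraps around modulo `n` when residues are taken in `{1, …, n}`. -/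
def wraps (n k m : ℕ) : ℕ := (k * m - 1) / n

/-- The representative of `k * m` modulo `n` in `{1, …, n}`, except that `residue n k 0 = 0`. -/
def residue (n k m : ℕ) : ℕ := k * m - n * wraps n k m

/-- The rank of `residue n k m` among the residues of `1, …, m`: the index `0`, with its residue
`0`, is counted in place of `m` itself. -/
def residueRank (n k m : ℕ) : ℕ :=
  ((Finset.range m).filter fun i => residue n k i < residue n k m).card

variable {k : ℕ}

lemma wraps_zero : wraps n k 0 = 0 := by simp [wraps]

lemma wraps_one (hkn : k < n) : wraps n k 1 = 0 :=
  Nat.div_eq_of_lt (by omega)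

lemma wraps_mono : Monotone (wraps n k) := fun _ _ h =>
  Nat.div_le_div_right (Nat.sub_le_sub_right (Nat.mul_le_mul_left k h) 1)

lemma residue_add_mul_wraps (m : ℕ) : residue n k m + n * wraps n k m = k * m :=
  Nat.sub_add_cancel ((Nat.mul_div_le _ _).trans (Nat.sub_le _ _))

lemma residue_zero : residue n k 0 = 0 := by simp [residue]

lemma residue_pos {m : ℕ} (hk : 0 < k) (hm : 0 < m) : 0 < residue n k m := by
  have hle : n * wraps n k m ≤ k * m - 1 := Nat.mul_div_le _ _
  have hkm : 0 < k * m := Nat.mul_pos hk hm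
  unfold residue
  omega

lemma residue_le (hn : 0 < n) (m : ℕ) : residue n k m ≤ n := by
  have hlt : k * m - 1 < n * wraps n k m + n := Nat.lt_mul_div_succ _ hn
  unfold residue
  omega

lemma residue_lt_of_coprime {m : ℕ} (hcop : Nat.Coprime n k) (hmn : m < n) :
    residue n k m < n := by
  have hn : 0 < n := by omega
  refine (residue_le hn m).lt_of_ne fun hres => ?_
  have hkm : residue n k m + n * wraps n k m = k * m := residue_add_mul_wraps m
  rw [hres] at hkm
  have hdvd : n ∣ m := hcop.dvd_of_dvd_mul_left (hkm ▸ (dvd_refl n).add (dvd_mul_right n _))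
  obtain rfl := Nat.eq_zero_of_dvd_of_lt hdvd hmn
  rw [residue_zero] at hres
  omega

lemma wraps_self (hn : 0 < n) (hk : 0 < k) : wraps n k n = k - 1 := by
  obtain ⟨p, rfl⟩ := Nat.exists_eq_add_of_le' hk
  rw [wraps, Nat.add_sub_cancel, Nat.div_eq_iff hn, add_mul]
  omega

lemma residue_self (hn : 0 < n) (hk : 0 < k) : residue n k n = n := by
  obtain ⟨p, rfl⟩ := Nat.exists_eq_add_of_le' hk
  rw [residue, wraps_self hn hk, Nat.add_sub_cancel, add_mul, mul_comm n p]
  omega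

lemma wraps_add {i j : ℕ} (hn : 0 < n) (hk : 0 < k) (hj : 0 < j) :
    wraps n k (i + j) =
      wraps n k i + wraps n k j + if residue n k i < residue n k (i + j) then 0 else 1 := by
  have hi_le := residue_le (k := k) hn i
  have hj_le := residue_le (k := k) hn j
  have hij_le := residue_le (k := k) hn (i + j)
  have hj_pos := residue_pos (n := n) hk hj
  have hij_pos := residue_pos (n := n) hk (Nat.add_pos_right i hj)
  have hsum : residue n k (i + j) + n * wraps n k (i + j) =
      residue n k i + residue n k j + n * (wraps n k i + wraps n k j) := by
    have hki := residue_add_mul_wraps (n := n) (k := k) i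
    have hkj := residue_add_mul_wraps (n := n) (k := k) j
    rw [residue_add_mul_wraps]
    linarith
  split_ifs with hlt
  · have hupper : wraps n k (i + j) < wraps n k i + wraps n k j + 1 :=
      Nat.lt_of_mul_lt_mul_left (a := n) (by rw [mul_add_one]; omega)
    have hlower : wraps n k i + wraps n k j < wraps n k (i + j) + 1 :=
      Nat.lt_of_mul_lt_mul_left (a := n) (by rw [mul_add_one]; omega)
    omega
  · have hupper : wraps n k (i + j) < wraps n k i + wraps n k j + 2 :=
      Nat.lt_of_mul_lt_mul_left (a := n) (by rw [mul_add _ _ 2]; omega)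
    have hlower : wraps n k i + wraps n k j < wraps n k (i + j) :=
      Nat.lt_of_mul_lt_mul_left (a := n) (by omega)
    omega

lemma residueRank_succ_mem_Icc (hk : 0 < k) (m : ℕ) :
    residueRank n k (m + 1) ∈ Set.Icc 1 (m + 1) := by
  refine ⟨Finset.card_pos.2 ⟨0, ?_⟩, (Finset.card_filter_le _ _).trans_eq (Finset.card_range _)⟩
  simp [residue_zero, residue_pos hk]

lemma residueRank_self (hk : 0 < k) (hcop : Nat.Coprime n k) : residueRank n k n = n := by
  rw [residueRank, Finset.filter_true_of_mem, Finset.card_range]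
  intro i hi
  have hin := Finset.mem_range.1 hi
  rw [residue_self (by omega) hk]
  exact residue_lt_of_coprime hcop hin

-- By `wraps_add`, an index `i` fails to be counted by `residueRank n k m` exactly when `wraps` is
-- not additive on `m = i + (m - i)`; sum over all `i < m`.
lemma residueRank_add_mul_wraps (hn : 0 < n) (hk : 0 < k) (m : ℕ) :
    residueRank n k m + m * wraps n k m =
      2 * ∑ i ∈ Finset.range m, wraps n k i + wraps n k m + m := by
  have hreflect : ∑ i ∈ Finset.range m, wraps n k (m - i) =
      ∑ i ∈ Finset.range m, wraps n k i + wraps n k m := by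
    rw [← Finset.sum_range_succ, Finset.sum_range_succ', wraps_zero, add_zero,
      ← Finset.sum_range_reflect]
    refine Finset.sum_congr rfl fun i hi => ?_
    have := Finset.mem_range.1 hi
    congr 1
    omega
  have hterm : ∀ i ∈ Finset.range m,
      wraps n k m + (if residue n k i < residue n k m then 1 else 0) =
        wraps n k i + wraps n k (m - i) + 1 := by
    intro i hi
    have him := Finset.mem_range.1 hi
    have hadd := wraps_add (i := i) hn hk (Nat.sub_pos_of_lt him)
    rw [Nat.add_sub_cancel' him.le] at hadd
    split_ifs at hadd ⊢ <;> omega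
  have hsum := Finset.sum_congr rfl hterm
  simp only [Finset.sum_add_distrib, Finset.sum_const, Finset.card_range, smul_eq_mul, mul_one,
    ← Finset.card_filter, hreflect] at hsum
  rw [residueRank]
  omega

lemma residueRank_succ (hn : 0 < n) (hk : 0 < k) (m : ℕ) :
    residueRank n k (m + 1) + m * wraps n k (m + 1) =
      residueRank n k m + m * wraps n k m + wraps n k m + 1 := by
  have hm := residueRank_add_mul_wraps hn hk m
  have hm' := residueRank_add_mul_wraps hn hk (m + 1)
  rw [Finset.sum_range_succ, add_mul, one_mul] at hm'
  omega

lemma ceil_eq_of_wraps_succ {m : ℕ} (hk : 0 < k) (hcop : Nat.Coprime n k) (hmn : m < n)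
    (hwm : wraps n k (m + 1) = wraps n k m + 1) :
    ⌈((n : ℚ) * (wraps n k m + 1 : ℕ)) / k⌉ = (m + 1 : ℕ) := by
  have hlower : k * m < n * (wraps n k m + 1) := by
    have := residue_lt_of_coprime hcop hmn
    rw [← residue_add_mul_wraps (n := n) m, mul_add]
    omega
  have hupper : n * (wraps n k m + 1) ≤ k * (m + 1) := by
    rw [← hwm, ← residue_add_mul_wraps (n := n) (m + 1)]
    exact Nat.le_add_left _ _
  have hk' : (0 : ℚ) < k := by exact_mod_cast hk
  rw [Int.ceil_eq_iff, lt_div_iff₀ hk', div_le_iff₀ hk', mul_comm _ (k : ℚ), mul_comm _ (k : ℚ)]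
  constructor
  · simpa using mod_cast hlower
  · exact_mod_cast hupper

lemma wraps_residueRank_step {m : ℕ} (hk : 0 < k) (hkn : k < n) :
    wraps n k (m + 1) = wraps n k m ∧
        residueRank n k (m + 1) = residueRank n k m + wraps n k m + 1 ∨
      wraps n k (m + 1) = wraps n k m + 1 ∧
        residueRank n k (m + 1) + m = residueRank n k m + wraps n k m + 1 := by
  have hn : 0 < n := by omega
  have hrank := residueRank_succ hn hk m
  have hadd := wraps_add (i := m) hn hk one_pos
  rw [wraps_one hkn, add_zero] at hadd
  split_ifs at hadd
  · rw [add_zero] at hadd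
    rw [hadd] at hrank
    exact Or.inl ⟨hadd, by omega⟩
  · rw [hadd, mul_add, mul_one] at hrank
    exact Or.inr ⟨hadd, by omega⟩

lemma isInsertionSchedule_residueRank {a : ℕ → ℕ} (hk : 0 < k) (hkn : k < n)
    (hcop : Nat.Coprime n k)
    (ha : ∀ i, 1 ≤ i → i < k → (a i : ℤ) = ⌈((n : ℚ) * i) / k⌉) :
    IsInsertionSchedule n (residueRank n k) (wraps n k) a where
  position_mem_Icc := residueRank_succ_mem_Icc hk
  factors_one := wraps_one hkn
  step m hmn := by
    refine (wraps_residueRank_step hk hkn).imp_right fun ⟨hwm, hrank⟩ => ⟨hwm, hrank, ?_⟩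
    have hle : wraps n k (m + 1) ≤ k - 1 :=
      (wraps_mono hmn).trans_eq (wraps_self (by omega) hk)
    have hceil := ha (wraps n k m + 1) (by omega) (by omega)
    rw [ceil_eq_of_wraps_succ hk hcop hmn hwm] at hceil
    exact_mod_cast hceil

end BraidGroup

/-- **Theorem 3.14 (Theorem in the paper).** If `n` and `k` are relatively prime with
`2 ≤ k ≤ n - 1` and `a_i = ⌈n·i/k⌉` for `1 ≤ i ≤ k-1`, then in `B n` the element `δ^k`
is conjugate to `δ · U_{a_1} ⋯ U_{a_{k-1}}`. -/
theorem delta_pow_conj (n k : ℕ) (hk2 : 2 ≤ k) (hkn : k ≤ n - 1) (hcop : Nat.Coprime n k)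
    (a : ℕ → ℕ) (ha : ∀ i, 1 ≤ i → i ≤ k - 1 → (a i : ℤ) = ⌈((n : ℚ) * i) / k⌉) :
    ∃ x : BraidGroup n,
      x⁻¹ * (BraidGroup.delta n) ^ k * x =
        BraidGroup.delta n *
          ((List.range (k - 1)).map (fun j => BraidGroup.U n (a (j + 1)))).prod := by
  have hk : 0 < k := by omega
  have hn : 0 < n := by omega
  have hschedule := BraidGroup.isInsertionSchedule_residueRank hk (by omega) hcop
    fun i hi hik => ha i hi (Nat.le_sub_one_of_lt hik)
  have hconj := hschedule.delta_pow_mul_insertionBraid hn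
    (BraidGroup.residueRank_self hk hcop)
  rw [BraidGroup.wraps_self hn hk, Nat.sub_add_cancel hk] at hconj
  exact ⟨BraidGroup.insertionBraid n (BraidGroup.residueRank n k) 0 (n - 1),
    by rw [mul_assoc, hconj, inv_mul_cancel_left]⟩
end

section
/- In the braid group B_n, for every k with 2 ≤ k ≤ n, the element U_k commutes with each of D_i, E_i and U_i for all 2 ≤ i ≤ k−1. -/
/-!
Conjugation by `E_k` shifts the generators up: `E_k σ_j E_k⁻¹ = σ_{j+1}` for `1 ≤ j ≤ k - 2`.
Reading words backwards is an anti-automorphism exchanging `E_k` and `D_k`, so conjugation by `D_k`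
shifts the generators back down. Hence `U_k = D_k E_k` commutes with `σ_1, …, σ_{k-2}`, and `D_i`,
`E_i`, `U_i` are words in these when `i ≤ k - 1`.
-/

/-- The elements `s 0, …, s (m - 1)` of a monoid satisfy the relations between the Artin generators
`σ_1, …, σ_m`. The indices start at `0`; the values `s i` with `m ≤ i` are unconstrained. -/
structure IsBraidSequence {M : Type*} [Monoid M] (m : ℕ) (s : ℕ → M) : Prop where
  commute : ∀ {i j : ℕ}, i + 2 ≤ j → j < m → Commute (s i) (s j)
  braid : ∀ {i : ℕ}, i + 1 < m → s i * s (i + 1) * s i = s (i + 1) * s i * s (i + 1)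

namespace IsBraidSequence

variable {M : Type*} [Monoid M] {m j k : ℕ} {s : ℕ → M}

protected theorem op (hs : IsBraidSequence m s) : IsBraidSequence m (MulOpposite.op ∘ s) where
  commute hij hj := (hs.commute hij hj).op
  braid hi := MulOpposite.unop_injective <| by
    simpa only [Function.comp_apply, MulOpposite.unop_mul, MulOpposite.unop_op, mul_assoc]
      using hs.braid hi

theorem commute_prod_range (hs : IsBraidSequence m s) (hkj : k < j) (hjm : j < m) :
    Commute ((List.range k).map s).prod (s j) :=
  Commute.list_prod_left _ _ <| List.forall_mem_map.2 fun _ hi =>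
    hs.commute (by have := List.mem_range.1 hi; omega) hjm

theorem semiconjBy_prod_range (hs : IsBraidSequence m s) (hjk : j + 2 ≤ k) (hkm : k ≤ m) :
    SemiconjBy ((List.range k).map s).prod (s j) (s (j + 1)) := by
  induction k, hjk using Nat.le_induction with
  | base =>
    have hbraid : SemiconjBy (s j * s (j + 1)) (s j) (s (j + 1)) := by
      rw [SemiconjBy, hs.braid hkm, mul_assoc]
    have hcomm : SemiconjBy ((List.range j).map s).prod (s (j + 1)) (s (j + 1)) :=
      hs.commute_prod_range j.lt_succ_self hkm
    rw [List.prod_range_succ, List.prod_range_succ, mul_assoc]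
    exact hcomm.mul_left hbraid
  | succ k hjk ih =>
    rw [List.prod_range_succ]
    exact (ih (Nat.le_of_succ_le hkm)).mul_left (hs.commute hjk hkm).symm

theorem semiconjBy_prod_range_reverse (hs : IsBraidSequence m s) (hjk : j + 2 ≤ k) (hkm : k ≤ m) :
    SemiconjBy ((List.range k).reverse.map s).prod (s (j + 1)) (s j) := by
  have hop : MulOpposite.op ((List.range k).reverse.map s).prod =
      ((List.range k).map (MulOpposite.op ∘ s)).prod := by
    rw [MulOpposite.op_list_prod, List.map_map, List.map_reverse, List.reverse_reverse]
  rw [← MulOpposite.semiconjBy_op, hop]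
  exact hs.op.semiconjBy_prod_range hjk hkm

end IsBraidSequence

namespace BraidGroup

theorem σ_succ {n i : ℕ} (hi : i < n - 1) : σ n (i + 1) = PresentedGroup.of ⟨i, hi⟩ :=
  dif_pos ⟨i.succ_pos, hi⟩

theorem isBraidSequence_σ (n : ℕ) : IsBraidSequence (n - 1) fun j => σ n (j + 1) where
  commute {i j} hij hj := by
    rw [σ_succ (by omega), σ_succ hj, commute_iff_eq, ← mul_inv_eq_one, mul_inv_rev, ← mul_assoc]
    exact PresentedGroup.one_of_mem (.inl ⟨⟨i, by omega⟩, ⟨j, hj⟩, .inl hij, rfl⟩)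
  braid {i} hi := by
    rw [σ_succ hi, σ_succ (Nat.lt_of_succ_lt hi), ← mul_inv_eq_one]
    exact PresentedGroup.one_of_mem
      (.inr ⟨⟨i, Nat.lt_of_succ_lt hi⟩, ⟨i + 1, hi⟩, .inl rfl, rfl⟩)

theorem U_commute_σ_succ {n j k : ℕ} (hjk : j + 3 ≤ k) (hkn : k ≤ n) :
    Commute (U n k) (σ n (j + 1)) := by
  have hj : j + 2 ≤ k - 1 := by omega
  have hk : k - 1 ≤ n - 1 := Nat.sub_le_sub_right hkn 1
  have hE : SemiconjBy (E n k) (σ n (j + 1)) (σ n (j + 2)) :=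
    (isBraidSequence_σ n).semiconjBy_prod_range hj hk
  have hD : SemiconjBy (D n k) (σ n (j + 2)) (σ n (j + 1)) :=
    (isBraidSequence_σ n).semiconjBy_prod_range_reverse hj hk
  exact hD.mul_left hE

theorem commute_D {n i : ℕ} {x : BraidGroup n} (hx : ∀ j < i - 1, Commute x (σ n (j + 1))) :
    Commute x (D n i) :=
  Commute.list_prod_right _ _ <| List.forall_mem_map.2 fun j hj =>
    hx j (List.mem_range.1 (List.mem_reverse.1 hj))

theorem commute_E {n i : ℕ} {x : BraidGroup n} (hx : ∀ j < i - 1, Commute x (σ n (j + 1))) :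
    Commute x (E n i) :=
  Commute.list_prod_right _ _ <| List.forall_mem_map.2 fun j hj => hx j (List.mem_range.1 hj)

end BraidGroup

/-- **Lemma (DEU (iii)).** In `B n`, for `2 ≤ k ≤ n`, the element `U_k` commutes with
each of `D_i`, `E_i` and `U_i` for all `2 ≤ i ≤ k - 1`. -/
theorem U_DEU_comm (n k : ℕ) (hk2 : 2 ≤ k) (hkn : k ≤ n)
    (i : ℕ) (hi2 : 2 ≤ i) (hi : i ≤ k - 1) :
    BraidGroup.U n k * BraidGroup.D n i = BraidGroup.D n i * BraidGroup.U n k ∧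
    BraidGroup.U n k * BraidGroup.E n i = BraidGroup.E n i * BraidGroup.U n k ∧
    BraidGroup.U n k * BraidGroup.U n i = BraidGroup.U n i * BraidGroup.U n k := by
  have hσ : ∀ j < i - 1, Commute (BraidGroup.U n k) (BraidGroup.σ n (j + 1)) :=
    fun j hj => BraidGroup.U_commute_σ_succ (by omega) hkn
  have hD : Commute (BraidGroup.U n k) (BraidGroup.D n i) := BraidGroup.commute_D hσ
  have hE : Commute (BraidGroup.U n k) (BraidGroup.E n i) := BraidGroup.commute_E hσ
  exact ⟨hD, hE, hD.mul_right hE⟩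
end

section
/- In the braid group B_n, the elements U_2, U_3, …, U_n pairwise commute: U_i·U_j = U_j·U_i for all 2 ≤ i, j ≤ n. -/
/-! Write `P k = s_{k-1} ⋯ s_1 s_0 s_0 s_1 ⋯ s_{k-1}`, so that `P (k+1) = s_k (P k) s_k`.
It suffices that `s_i` commutes with `P k` whenever `i + 2 ≤ k`, since every shorter `P` is a word
in such `s_i`. For `k = i + 2` this is one computation with the braid relation, carried across
`P i`, with which `s_{i+1}` commutes; beyond that, each further factor `s_k` commutes with `s_i`. -/

/-- The element `s_{k-1} ⋯ s_1 s_0 s_0 s_1 ⋯ s_{k-1}`: the paper's `U_{k+1}` for an arbitrary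
sequence `s` in a monoid, indexed from `0`. -/
def palindromicProd {M : Type*} [Monoid M] (s : ℕ → M) : ℕ → M
  | 0 => 1
  | k + 1 => s k * palindromicProd s k * s k

/-- The first `m` terms `s_0, …, s_{m-1}` of the sequence `s` satisfy the braid relations of
`B_{m+1}`; nothing is asked of the later terms. -/
structure BraidRelations {M : Type*} [Monoid M] (s : ℕ → M) (m : ℕ) : Prop where
  commute : ∀ ⦃i j : ℕ⦄, i + 2 ≤ j → j < m → Commute (s i) (s j)
  braid : ∀ ⦃i : ℕ⦄, i + 1 < m → s i * s (i + 1) * s i = s (i + 1) * s i * s (i + 1)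

theorem commute_mul_mul_of_braid {S : Type*} [Semigroup S] {a b u : S}
    (hab : a * b * a = b * a * b) (hbu : Commute b u) : Commute a (b * (a * u * a) * b) :=
  calc a * (b * (a * u * a) * b) = a * b * a * (u * a * b) := by simp only [mul_assoc]
    _ = b * a * (b * u) * (a * b) := by rw [hab]; simp only [mul_assoc]
    _ = b * a * u * (b * a * b) := by rw [hbu.eq]; simp only [mul_assoc]
    _ = b * (a * u * a) * b * a := by rw [← hab]; simp only [mul_assoc]

section Monoid

variable {M : Type*} [Monoid M] {s : ℕ → M} {m : ℕ}

theorem commute_palindromicProd {x : M} {k : ℕ} (h : ∀ i < k, Commute x (s i)) :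
    Commute x (palindromicProd s k) := by
  induction k with
  | zero => exact Commute.one_right x
  | succ k ih =>
    have hk : Commute x (s k) := h k k.lt_succ_self
    exact (hk.mul_right (ih fun i hi => h i (hi.trans k.lt_succ_self))).mul_right hk

theorem BraidRelations.commute_palindromicProd_of_add_two_le (h : BraidRelations s m) {i k : ℕ}
    (hik : i + 2 ≤ k) (hkm : k ≤ m) : Commute (s i) (palindromicProd s k) := by
  induction k, hik using Nat.le_induction with
  | base =>
    have hcomm : Commute (s (i + 1)) (palindromicProd s i) :=
      commute_palindromicProd fun l hl => (h.commute (by omega) hkm).symm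
    exact commute_mul_mul_of_braid (h.braid hkm) hcomm
  | succ k hik ih =>
    have hk : Commute (s i) (s k) := h.commute hik hkm
    exact (hk.mul_right (ih (Nat.le_of_succ_le hkm))).mul_right hk

theorem U_comm_general (h : BraidRelations s m) {i j : ℕ} (hi : i ≤ m) (hj : j ≤ m) :
    Commute (palindromicProd s i) (palindromicProd s j) := by
  wlog hij : i < j generalizing i j
  · obtain rfl | hji := (not_lt.mp hij).eq_or_lt
    · exact Commute.refl _
    · exact (this hj hi hji).symm
  exact (commute_palindromicProd fun l hl =>
    (h.commute_palindromicProd_of_add_two_le (by omega) hj).symm).symm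

end Monoid

namespace BraidGroup

theorem braidRelations_σ (n : ℕ) : BraidRelations (fun i => σ n (i + 1)) (n - 1) where
  commute i j hij hj := by
    have hrel := PresentedGroup.one_of_mem (rels := braidRels (n - 1))
      (Or.inl ⟨⟨i, by omega⟩, ⟨j, hj⟩, Or.inl hij, rfl⟩)
    rw [map_mul, map_inv, mul_inv_eq_one, map_mul, map_inv, mul_inv_eq_iff_eq_mul, map_mul] at hrel
    simp only [σ_succ hj, σ_succ (show i < n - 1 by omega)]
    exact hrel
  braid i hi := by
    have hrel := PresentedGroup.one_of_mem (rels := braidRels (n - 1))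
      (Or.inr ⟨⟨i, by omega⟩, ⟨i + 1, hi⟩, Or.inl rfl, rfl⟩)
    simp only [map_mul, map_inv, mul_inv_eq_one] at hrel
    simp only [σ_succ hi, σ_succ (show i < n - 1 by omega)]
    exact hrel

theorem U_eq_palindromicProd (n k : ℕ) :
    U n k = palindromicProd (fun i => σ n (i + 1)) (k - 1) := by
  unfold U D E
  induction k - 1 with
  | zero => simp [palindromicProd]
  | succ k ih => simp [palindromicProd, ← ih, List.range_succ, mul_assoc]

end BraidGroup

/-- In `B n`, the elements `U_2, …, U_n` pairwise commute. -/
theorem U_comm (n i j : ℕ) (hi2 : 2 ≤ i) (hin : i ≤ n) (hj2 : 2 ≤ j) (hjn : j ≤ n) :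
    BraidGroup.U n i * BraidGroup.U n j = BraidGroup.U n j * BraidGroup.U n i := by
  simp only [BraidGroup.U_eq_palindromicProd]
  exact U_comm_general (BraidGroup.braidRelations_σ n) (by omega) (by omega)
end

section
/- Let n and k be relatively prime integers with 2 ≤ k ≤ n−1. For 1 ≤ i ≤ k−1 set a_i = ⌈n·i/k⌉ and r_i = k·a_i − n·i. Then for each i, k·(a_i − 1) + 1 ≡ n + r_i − k + 1 (mod n) and n − k + 2 ≤ n + r_i − k + 1 ≤ n; consequently the map i ↦ n + r_i − k + 1 is a bijection from {1,…,k−1} onto {n−k+2, n−k+3, …, n}. -/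
/-!
The remainder `r_i` is the residue of `-n * i` modulo `k`. As `-n` is a unit modulo `k`,
multiplication by it permutes the nonzero residues `1, …, k - 1`, and adding `n - k + 1` moves
these to `n - k + 2, …, n`. The congruence modulo `n` holds because its two sides differ by
`n * (i - 1)`.
-/

open Set

theorem bijOn_mul_emod_Ioo {m k : ℤ} (hmk : IsCoprime m k) :
    BijOn (fun i ↦ m * i % k) (Ioo 0 k) (Ioo 0 k) := by
  have hmaps : MapsTo (fun i ↦ m * i % k) (Ioo 0 k) (Ioo 0 k) := by
    rintro i ⟨hi, hik⟩
    have hk : 0 < k := hi.trans hik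
    have hne : m * i % k ≠ 0 := fun h ↦
      hik.not_ge <| Int.le_of_dvd hi <| hmk.symm.dvd_of_dvd_mul_left <| Int.dvd_of_emod_eq_zero h
    exact ⟨(Int.emod_nonneg _ hk.ne').lt_of_ne' hne, Int.emod_lt_of_pos _ hk⟩
  have hinj : InjOn (fun i ↦ m * i % k) (Ioo 0 k) := by
    rintro i ⟨hi, hik⟩ j ⟨hj, hjk⟩ (hij : m * i ≡ m * j [ZMOD k])
    have hmod : i ≡ j [ZMOD k] :=
      Int.modEq_iff_dvd.2 <| hmk.symm.dvd_of_dvd_mul_left <| by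
        simpa only [mul_sub] using hij.dvd
    rwa [Int.ModEq, Int.emod_eq_of_lt hi.le hik, Int.emod_eq_of_lt hj.le hjk] at hmod
  exact ((finite_Ioo 0 k).injOn_iff_bijOn_of_mapsTo hmaps).1 hinj

theorem mul_ceil_div_sub_eq_neg_emod (m : ℤ) (k : ℕ) :
    (k : ℤ) * ⌈(m : ℚ) / k⌉ - m = -m % k := by
  rw [Rat.ceil_intCast_div_natCast, mul_neg, Int.emod_def]
  ring

theorem bijOn_mul_ceil_mul_div_sub {n : ℤ} {k : ℕ} (hnk : IsCoprime n k) :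
    BijOn (fun i : ℕ ↦ (k : ℤ) * ⌈(n : ℚ) * i / k⌉ - n * i) (Ioo 0 k) (Ioo 0 (k : ℤ)) := by
  have hcast : BijOn ((↑) : ℕ → ℤ) (Ioo 0 k) (Ioo 0 (k : ℤ)) := by
    simpa only [Nat.image_cast_int_Ioo, Nat.cast_zero] using
      (Nat.cast_injective (R := ℤ)).injOn.bijOn_image (s := Ioo 0 k)
  refine ((bijOn_mul_emod_Ioo hnk.neg_left).comp hcast).congr fun i _ ↦ ?_
  simpa using (mul_ceil_div_sub_eq_neg_emod (n * i) k).symm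

theorem mul_sub_one_add_one_modEq (n k a i : ℤ) :
    k * (a - 1) + 1 ≡ n + (k * a - n * i) - k + 1 [ZMOD n] :=
  Int.modEq_iff_dvd.2 ⟨1 - i, by ring⟩

theorem shifted_remainder_bijection_general {n : ℤ} {k : ℕ} (hnk : IsCoprime n k) (a r : ℕ → ℤ)
    (ha : ∀ i, a i = ⌈((n : ℚ) * i) / k⌉) (hr : ∀ i, r i = k * a i - n * i) :
    (∀ i : ℕ, 1 ≤ i → i ≤ k - 1 →
      k * (a i - 1) + 1 ≡ n + r i - k + 1 [ZMOD n] ∧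
      n - k + 2 ≤ n + r i - k + 1 ∧ n + r i - k + 1 ≤ n) ∧
    (∀ i j : ℕ, 1 ≤ i → i ≤ k - 1 → 1 ≤ j → j ≤ k - 1 →
      n + r i - k + 1 = n + r j - k + 1 → i = j) ∧
    (∀ t : ℤ, n - k + 2 ≤ t → t ≤ n →
      ∃ i : ℕ, 1 ≤ i ∧ i ≤ k - 1 ∧ n + r i - k + 1 = t) := by
  obtain ⟨hmaps, hinj, hsurj⟩ : BijOn r (Ioo 0 k) (Ioo 0 (k : ℤ)) :=
    (bijOn_mul_ceil_mul_div_sub hnk).congr fun i _ ↦ by rw [hr, ha]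
  refine ⟨fun i hi hik ↦ ⟨?_, ?_⟩, fun i j hi hik hj hjk hij ↦ ?_, fun t ht htn ↦ ?_⟩
  · rw [hr]
    exact mul_sub_one_add_one_modEq n k (a i) i
  · obtain ⟨hpos, hlt⟩ : r i ∈ Ioo 0 (k : ℤ) := hmaps ⟨hi, by omega⟩
    omega
  · exact hinj ⟨hi, by omega⟩ ⟨hj, by omega⟩ (by omega)
  · obtain ⟨i, ⟨hi, hik⟩, hri⟩ : t - n + k - 1 ∈ r '' Ioo 0 k := hsurj ⟨by omega, by omega⟩
    exact ⟨i, hi, by omega, by omega⟩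


/-- Let `n, k` be relatively prime with `2 ≤ k ≤ n - 1`, and for `1 ≤ i ≤ k - 1` set
`a_i = ⌈n·i/k⌉` and `r_i = k·a_i − n·i`. Then for each such `i`,
`k·(a_i − 1) + 1 ≡ n + r_i − k + 1 (mod n)` and `n − k + 2 ≤ n + r_i − k + 1 ≤ n`;
moreover `i ↦ n + r_i − k + 1` is a bijection from `{1,…,k-1}` onto `{n−k+2,…,n}`. -/
theorem shifted_remainder_bijection (n k : ℕ) (hk2 : 2 ≤ k) (hkn : k ≤ n - 1)
    (hcop : Nat.Coprime n k) (a r : ℕ → ℤ)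
    (ha : ∀ i, a i = ⌈((n : ℚ) * i) / k⌉)
    (hr : ∀ i, r i = k * a i - n * i) :
    (∀ i : ℕ, 1 ≤ i → i ≤ k - 1 →
      (k * (a i - 1) + 1) ≡ ((n : ℤ) + r i - k + 1) [ZMOD (n : ℤ)] ∧
      (n : ℤ) - k + 2 ≤ (n : ℤ) + r i - k + 1 ∧ (n : ℤ) + r i - k + 1 ≤ (n : ℤ)) ∧
    (∀ i j : ℕ, 1 ≤ i → i ≤ k - 1 → 1 ≤ j → j ≤ k - 1 →
      (n : ℤ) + r i - k + 1 = (n : ℤ) + r j - k + 1 → i = j) ∧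
    (∀ t : ℤ, (n : ℤ) - k + 2 ≤ t → t ≤ (n : ℤ) →
      ∃ i : ℕ, 1 ≤ i ∧ i ≤ k - 1 ∧ (n : ℤ) + r i - k + 1 = t) :=
  shifted_remainder_bijection_general (Nat.isCoprime_iff_coprime.2 hcop) a r (by simpa using ha) hr
end

section
/- Let n ≥ 1, p = 2n+1, and let π = (n+1, n, …, 1) ⊙ (a_2, a_4, …, a_{2n}) be a strongly braided petal permutation of length p. Then for every 1 ≤ k ≤ n, the stabilization s_k(π) is a strongly braided petal permutation of length p+2, namely s_k(π) = (n+2, n+1, …, 1) ⊙ (a_2+1, a_4+1, …, a_{2(n−k+1)}+1, 2n+3, a_{2(n−k+2)}+1, …, a_{2n}+1); i.e., the sequence of even-position entries of s_k(π) is obtained from (a_2, a_4, …, a_{2n}) by increasing each term by 1 and then inserting p+2 = 2n+3 at the k-th position from the right. -/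
/-!
In `π = (n+1, …, 1) ⊙ b` the odd positions use up the values `1, …, n+1`, so `k` sits at an odd
position and every entry of `b` exceeds `k`. Cut `π` just before `k`. Stabilization raises by `1`
all of `b` and the odd-position entries `n+1, …, k+1` to the left of the cut, and inserts
`k+1, p+2` at the cut: `k+1` fills the gap left in the descending sequence, and `p+2` becomes the
new entry of `b`. Since two entries are inserted, all other entries keep the parity of their
position.
-/

/-- Interleaving of sequences: `(x_1,…,x_{m+1}) ⊙ (y_1,…,y_m) =
(x_1, y_1, x_2, y_2, …, x_m, y_m, x_{m+1})`. -/
def interleave : List ℕ → List ℕ → List ℕ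
  | x :: xs, y :: ys => x :: y :: interleave xs ys
  | xs, [] => xs
  | [], _ :: _ => []

/-- The descending sequence `(m, m-1, …, 2, 1)`. -/
def desc (m : ℕ) : List ℕ := (List.range m).reverse.map (· + 1)

/-- The stabilization `s_k` at `k` of a petal permutation of length `p`: each entry
`a ≤ k` with `a ≠ k` is kept, each entry `a > k` is replaced by `a + 1`, and the
(unique) entry equal to `k` is replaced by the three entries `(k+1, p+2, k)`. -/
def stab (k p : ℕ) (π : List ℕ) : List ℕ :=
  π.flatMap (fun a => if a = k then [k + 1, p + 2, k] else if a ≤ k then [a] else [a + 1])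

theorem length_desc (m : ℕ) : (desc m).length = m := by
  simp [desc]

theorem desc_succ (m : ℕ) : desc (m + 1) = (m + 1) :: desc m := by
  simp [desc, List.range_succ]

theorem desc_add (j k : ℕ) : desc (j + k) = (desc j).map (· + k) ++ desc k := by
  induction j with
  | zero => simp [desc]
  | succ j ih => simp [Nat.add_right_comm j 1 k, desc_succ, ih]

theorem mem_desc {m a : ℕ} : a ∈ desc m ↔ 1 ≤ a ∧ a ≤ m := by
  induction m with
  | zero => exact iff_of_false (by simp [desc]) (by omega)
  | succ m ih =>
    rw [desc_succ, List.mem_cons, ih]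
    omega

theorem notMem_map_add_desc (j k : ℕ) : k ∉ (desc j).map (· + k) := by
  simp [mem_desc]

theorem notMem_desc_of_lt {i k : ℕ} (h : i < k) : k ∉ desc i :=
  fun hk => h.not_ge (mem_desc.1 hk).2

theorem nodup_desc (m : ℕ) : (desc m).Nodup := by
  induction m with
  | zero => simp [desc]
  | succ m ih => simp [desc_succ, mem_desc, ih]

theorem interleave_append {us ws : List ℕ} (h : us.length = ws.length) (xs ys : List ℕ) :
    interleave (us ++ xs) (ws ++ ys) = interleave us ws ++ interleave xs ys := by
  induction us, ws using interleave.induct <;> simp_all [interleave]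

theorem interleave_perm_append {xs ys : List ℕ} (h : ys.length ≤ xs.length) :
    (interleave xs ys).Perm (xs ++ ys) := by
  induction xs, ys using interleave.induct with
  | case1 x xs y ys ih =>
    have ih := ih (by simpa using h)
    exact ((ih.cons y).trans List.perm_middle.symm).cons x
  | case2 xs => simp [interleave]
  | case3 y ys => simp at h

theorem lt_of_mem_of_interleave_desc_perm {m N a : ℕ} {b : List ℕ} (hb : b.length ≤ m)
    (h : (interleave (desc m) b).Perm (desc N)) (ha : a ∈ b) : m < a := by
  have happ : (desc m ++ b).Perm (desc N) :=
    (interleave_perm_append (by rwa [length_desc])).symm.trans h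
  have hpos : 1 ≤ a := (mem_desc.1 (happ.subset (List.mem_append_right _ ha))).1
  have hdisj := List.disjoint_of_nodup_append (happ.nodup_iff.2 (nodup_desc N))
  by_contra! hle
  exact hdisj (mem_desc.2 ⟨hpos, hle⟩) ha

/-- The relabelling `a ↦ a'` that `s_k` applies to the entries other than `k`, making room for
the new value `k + 1`. -/
def raiseAbove (k a : ℕ) : ℕ := if a ≤ k then a else a + 1

section Stab

variable {k : ℕ}

theorem map_raiseAbove_of_forall_le {l : List ℕ} (h : ∀ a ∈ l, a ≤ k) :
    l.map (raiseAbove k) = l :=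
  (List.map_congr_left fun a ha => if_pos (h a ha)).trans l.map_id

theorem map_raiseAbove_of_forall_lt {l : List ℕ} (h : ∀ a ∈ l, k < a) :
    l.map (raiseAbove k) = l.map (· + 1) :=
  List.map_congr_left fun a ha => if_neg (h a ha).not_ge

theorem map_raiseAbove_map_add_desc (j : ℕ) :
    ((desc j).map (· + k)).map (raiseAbove k) = (desc j).map (· + (k + 1)) := by
  rw [map_raiseAbove_of_forall_lt, List.map_map]
  · rfl
  · simp only [List.forall_mem_map, mem_desc]
    omega

theorem map_raiseAbove_desc_of_le {i : ℕ} (h : i ≤ k) : (desc i).map (raiseAbove k) = desc i :=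
  map_raiseAbove_of_forall_le fun _ ha => (mem_desc.1 ha).2.trans h

variable (p : ℕ)

theorem stab_perm {l l' : List ℕ} (h : l.Perm l') : (stab k p l).Perm (stab k p l') :=
  h.flatMap_right _

theorem stab_append (l l' : List ℕ) : stab k p (l ++ l') = stab k p l ++ stab k p l' :=
  List.flatMap_append

theorem stab_cons_self (l : List ℕ) :
    stab k p (k :: l) = (k + 1) :: (p + 2) :: k :: stab k p l := by
  simp [stab]

theorem stab_cons_of_ne {a : ℕ} (h : a ≠ k) (l : List ℕ) :
    stab k p (a :: l) = raiseAbove k a :: stab k p l := by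
  simp only [stab, raiseAbove, List.flatMap_cons, if_neg h]
  split_ifs <;> rfl

theorem stab_of_notMem {l : List ℕ} (h : k ∉ l) : stab k p l = l.map (raiseAbove k) := by
  induction l with
  | nil => rfl
  | cons a l ih =>
    rw [List.mem_cons, not_or] at h
    rw [stab_cons_of_ne p (Ne.symm h.1), ih h.2, List.map_cons]

theorem stab_append_cons {l l' : List ℕ} (hl : k ∉ l) (hl' : k ∉ l') :
    stab k p (l ++ k :: l') =
      l.map (raiseAbove k) ++ (k + 1) :: (p + 2) :: k :: l'.map (raiseAbove k) := by
  rw [stab_append, stab_cons_self, stab_of_notMem p hl, stab_of_notMem p hl']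

theorem stab_interleave_of_notMem {xs ys : List ℕ} (hxs : k ∉ xs) (hys : k ∉ ys) :
    stab k p (interleave xs ys) =
      interleave (xs.map (raiseAbove k)) (ys.map (raiseAbove k)) := by
  induction xs, ys using interleave.induct with
  | case1 x xs y ys ih =>
    rw [List.mem_cons, not_or] at hxs hys
    simp only [interleave, List.map_cons, stab_cons_of_ne p (Ne.symm hxs.1),
      stab_cons_of_ne p (Ne.symm hys.1), ih hxs.2 hys.2]
  | case2 xs => simpa [interleave] using stab_of_notMem p hxs
  | case3 y ys => simp [interleave, stab]

theorem stab_interleave_cons_self {xs ys : List ℕ} (hxs : k ∉ xs) (hys : k ∉ ys) :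
    stab k p (interleave (k :: xs) ys) =
      interleave ((k + 1) :: k :: xs.map (raiseAbove k)) ((p + 2) :: ys.map (raiseAbove k)) := by
  cases ys with
  | nil => simp [interleave, stab_cons_self, stab_of_notMem p hxs]
  | cons y ys =>
    rw [List.mem_cons, not_or] at hys
    simp only [interleave, List.map_cons, stab_cons_self, stab_cons_of_ne p (Ne.symm hys.1),
      stab_interleave_of_notMem p hxs hys.2]

theorem stab_interleave_append_cons {us ws xs ys : List ℕ} (hlen : us.length = ws.length)
    (hus : k ∉ us) (hws : k ∉ ws) (hxs : k ∉ xs) (hys : k ∉ ys) :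
    stab k p (interleave (us ++ k :: xs) (ws ++ ys)) =
      interleave (us.map (raiseAbove k) ++ (k + 1) :: k :: xs.map (raiseAbove k))
        (ws.map (raiseAbove k) ++ (p + 2) :: ys.map (raiseAbove k)) := by
  rw [interleave_append hlen, stab_append, stab_interleave_of_notMem p hus hws,
    stab_interleave_cons_self p hxs hys, interleave_append (by simpa using hlen)]

end Stab

theorem stab_desc_perm {k m : ℕ} (p : ℕ) (hk : 1 ≤ k) (hkm : k ≤ m) :
    (stab k p (desc m)).Perm ((p + 2) :: desc (m + 1)) := by
  obtain ⟨i, rfl⟩ := Nat.exists_eq_add_of_le' hk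
  obtain ⟨j, rfl⟩ := Nat.exists_eq_add_of_le' hkm
  have hstab : stab (i + 1) p (desc (j + (i + 1))) =
      (desc j).map (· + (i + 2)) ++ (i + 2) :: (p + 2) :: desc (i + 1) := by
    rw [desc_add, desc_succ i, stab_append_cons p (notMem_map_add_desc _ _)
      (notMem_desc_of_lt i.lt_succ_self), map_raiseAbove_map_add_desc,
      map_raiseAbove_desc_of_le i.le_succ]
  have hdesc : desc (j + (i + 1) + 1) =
      (desc j).map (· + (i + 2)) ++ (i + 2) :: desc (i + 1) := by
    rw [← desc_succ, ← desc_add, Nat.add_assoc]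
  rw [hstab, hdesc]
  exact ((List.Perm.swap _ _ _).append_left _).trans List.perm_middle

theorem stab_interleave_desc {k : ℕ} (p : ℕ) (hk : 1 ≤ k) {ws ys : List ℕ}
    (hws : ∀ a ∈ ws, k < a) (hys : ∀ a ∈ ys, k < a) :
    stab k p (interleave (desc (ws.length + k)) (ws ++ ys)) =
      interleave (desc (ws.length + k + 1))
        (ws.map (· + 1) ++ (p + 2) :: ys.map (· + 1)) := by
  obtain ⟨i, rfl⟩ := Nat.exists_eq_add_of_le' hk
  rw [desc_add, desc_succ i, stab_interleave_append_cons p (by simp [length_desc])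
    (notMem_map_add_desc _ _) (fun h => (hws _ h).false) (notMem_desc_of_lt i.lt_succ_self)
    (fun h => (hys _ h).false), map_raiseAbove_map_add_desc, map_raiseAbove_desc_of_le i.le_succ,
    map_raiseAbove_of_forall_lt hws, map_raiseAbove_of_forall_lt hys, ← desc_succ, ← desc_succ,
    ← desc_add]
  rfl

theorem stab_strongly_braided_general (n k : ℕ) (hk1 : 1 ≤ k) (hkn : k ≤ n + 1)
    (b : List ℕ) (hb : b.length = n)
    (hperm : (interleave (desc (n + 1)) b).Perm (desc (2 * n + 1))) :
    stab k (2 * n + 1) (interleave (desc (n + 1)) b) =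
      interleave (desc (n + 2))
        ((b.take (n + 1 - k)).map (· + 1) ++ [2 * n + 3] ++
          (b.drop (n + 1 - k)).map (· + 1)) ∧
    (stab k (2 * n + 1) (interleave (desc (n + 1)) b)).Perm (desc (2 * n + 3)) := by
  have hlt : ∀ a ∈ b, k < a := fun a ha =>
    hkn.trans_lt (lt_of_mem_of_interleave_desc_perm (by omega) hperm ha)
  have hlen : (b.take (n + 1 - k)).length + k = n + 1 := by
    rw [List.length_take]
    omega
  constructor
  · simpa only [List.take_append_drop, hlen, List.append_assoc, List.singleton_append]
      using stab_interleave_desc (2 * n + 1) hk1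
        (fun a ha => hlt a (List.mem_of_mem_take (i := n + 1 - k) ha))
        (fun a ha => hlt a (List.mem_of_mem_drop (i := n + 1 - k) ha))
  · rw [desc_succ (2 * n + 2)]
    exact (stab_perm _ hperm).trans (stab_desc_perm _ hk1 (by omega))

/-- **Lemma (stabilization of strongly braided petal permutations).**
Let `n ≥ 1`, `p = 2n+1`, and let `π = (n+1, n, …, 1) ⊙ (a_2, a_4, …, a_{2n})` be a
strongly braided petal permutation of length `p` (a bijection of `{1,…,p}`). Then for
`1 ≤ k ≤ n`, the stabilization `s_k(π)` is the strongly braided petal permutation of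
length `p+2` whose even-position entries are obtained from `(a_2, a_4, …, a_{2n})` by
increasing each term by `1` and inserting `p + 2 = 2n + 3` at the `k`-th position from
the right. -/
theorem stab_strongly_braided (n k : ℕ) (hn : 1 ≤ n) (hk1 : 1 ≤ k) (hkn : k ≤ n)
    (b : List ℕ) (hb : b.length = n)
    (hperm : (interleave (desc (n + 1)) b).Perm (desc (2 * n + 1))) :
    stab k (2 * n + 1) (interleave (desc (n + 1)) b) =
      interleave (desc (n + 2))
        ((b.take (n - k + 1)).map (· + 1) ++ [2 * n + 3] ++
          (b.drop (n - k + 1)).map (· + 1)) ∧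
    (stab k (2 * n + 1) (interleave (desc (n + 1)) b)).Perm (desc (2 * n + 3)) := by
  simpa only [Nat.sub_add_comm hkn] using
    stab_strongly_braided_general n k hk1 (by omega) b hb hperm
end
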